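/- Let d ≥ 2, let A, B, C be fixed d×d complex matrices, and let U be distributed according to the normalized Haar probability measure on U(d). Then, entrywise, E[ U A U* B U C U* ] = (1/(d²−1)) · ( trace(A) trace(C) · B + trace(AC) trace(B) · I ) − (1/(d(d²−1))) · ( trace(AC) · B + trace(A) trace(B) trace(C) · I ). -/

import Mathlib

open MeasureTheory Matrix

noncomputable instance {d : ℕ} : MeasurableSpace (Matrix.unitaryGroup (Fin d) ℂ) := borel _
instance {d : ℕ} : BorelSpace (Matrix.unitaryGroup (Fin d) ℂ) := ⟨rfl⟩

/-! By left invariance of `μ`, the linear map `Φ X = ∫ U, (U A U*) X (U C U*) ∂μ` satisfies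
`Φ (V X V*) = V (Φ X) V*` for every unitary `V`. Such a map has the form `Φ X = p X + q (tr X) I`:
by the spectral theorem it is determined by its values on the diagonal matrix units `E i i`;
conjugation by diagonal sign matrices forces `Φ (E i i)` to be diagonal, and conjugation by
permutation matrices leaves only two free entries. With `d` the dimension, evaluating `tr (Φ I)` and
`∑ i, ∑ j, (Φ (E i j)) i j` in two ways gives `d p + d² q = tr (A C)` and
`d² p + d q = tr A tr C`, which determine `p` and `q` when `d ≥ 2`. -/

open Unitary (conjStarAlgAut conjStarAlgAut_apply)

lemma exists_eq_ite_add_of_perm_invariant {α β : Type*} [DecidableEq α] [AddCommGroup β]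
    {f : α → α → β} (hf : ∀ (σ : Equiv.Perm α) (i j : α), f (σ i) (σ j) = f i j) :
    ∃ p q : β, ∀ i j, f i j = (if i = j then p else 0) + q := by
  have diag_eq (i j : α) : f i i = f j j := by simpa using (hf (Equiv.swap i j) i i).symm
  cases subsingleton_or_nontrivial α with
  | inl _ =>
    cases isEmpty_or_nonempty α with
    | inl _ => exact ⟨0, 0, isEmptyElim⟩
    | inr hα =>
      obtain ⟨a⟩ := hα
      exact ⟨f a a, 0, fun i j => by simp [Subsingleton.elim i a, Subsingleton.elim j a]⟩
  | inr _ =>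
    obtain ⟨a, b, hab⟩ := exists_pair_ne α
    refine ⟨f a a - f a b, f a b, fun i j => ?_⟩
    by_cases hij : i = j
    · subst hij
      simp [diag_eq i a]
    · obtain ⟨σ, hσi, hσj⟩ := MulAction.is_two_pretransitive_iff.mp
        (Equiv.Perm.isMultiplyPretransitive α 2) hij hab
      simp only [Equiv.Perm.smul_def] at hσi hσj
      simp [hij, ← hf σ i j, hσi, hσj]

section Depolarizing

variable {n R : Type*} [Fintype n] [DecidableEq n] [CommSemiring R]

/-- The depolarizing map `X ↦ p X + q (tr X) I`, without any normalization of `p` and `q`; over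
`ℂ` these maps exhaust the unitarily covariant ones. -/
def depolarizing (n : Type*) [Fintype n] [DecidableEq n] (p q : R) :
    Matrix n n R →ₗ[R] Matrix n n R :=
  p • LinearMap.id + q • (traceLinearMap n R R).smulRight 1

lemma depolarizing_apply (p q : R) (X : Matrix n n R) :
    depolarizing n p q X = p • X + q • X.trace • 1 := rfl

lemma trace_depolarizing_one (p q : R) :
    (depolarizing n p q 1).trace = Fintype.card n * p + Fintype.card n ^ 2 * q := by
  simp only [depolarizing_apply, trace_one, trace_add, trace_smul, smul_eq_mul]
  ring

lemma sum_depolarizing_single (p q : R) :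
    ∑ i, ∑ j, depolarizing n p q (single i j 1) i j =
      Fintype.card n ^ 2 * p + Fintype.card n * q := by
  simp only [depolarizing_apply, smul_single, smul_eq_mul, mul_one, Matrix.add_apply,
    single_apply_same, Matrix.smul_apply, one_apply, mul_ite, mul_zero, Finset.sum_add_distrib,
    Finset.sum_const, Finset.card_univ, nsmul_eq_mul, Finset.sum_ite_eq, Finset.mem_univ,
    ↓reduceIte, trace_single_eq_same]
  ring

end Depolarizing

section UnitaryGroup

variable {n R : Type*} [Fintype n] [DecidableEq n] [CommRing R] [StarRing R]

/-- A linear map on matrices is unitarily covariant when it commutes with conjugation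
`X ↦ V X V*` by every unitary matrix `V`. -/
def IsUnitarilyCovariant (Φ : Matrix n n R →ₗ[R] Matrix n n R) : Prop :=
  ∀ (V : unitaryGroup n R) (X : Matrix n n R),
    Φ (conjStarAlgAut R _ V X) = conjStarAlgAut R _ V (Φ X)

lemma permMatrix_mem_unitaryGroup (σ : Equiv.Perm n) : σ.permMatrix R ∈ unitaryGroup n R := by
  rw [mem_unitaryGroup_iff, star_eq_conjTranspose, conjTranspose_permMatrix, ← permMatrix_mul,
    inv_mul_cancel, permMatrix_one]

lemma diagonal_mem_unitaryGroup {v : n → R} (hv : ∀ i, v i * star (v i) = 1) :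
    diagonal v ∈ unitaryGroup n R := by
  simp [mem_unitaryGroup_iff, star_eq_conjTranspose, diagonal_conjTranspose, hv]

lemma trace_conjStarAlgAut (U : unitaryGroup n R) (X : Matrix n n R) :
    (conjStarAlgAut R _ U X).trace = X.trace := by
  rw [conjStarAlgAut_apply, trace_mul_comm, ← Matrix.mul_assoc, Unitary.coe_star_mul_self,
    Matrix.one_mul]

lemma isUnitarilyCovariant_depolarizing (p q : R) :
    IsUnitarilyCovariant (depolarizing n p q) := fun V X => by
  simp only [depolarizing_apply, map_add, map_smul, map_one, trace_conjStarAlgAut]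

namespace IsUnitarilyCovariant

variable {Φ : Matrix n n R →ₗ[R] Matrix n n R}

lemma map_submatrix_perm (hΦ : IsUnitarilyCovariant Φ) (σ : Equiv.Perm n) (X : Matrix n n R) :
    Φ (X.submatrix σ σ) = (Φ X).submatrix σ σ := by
  let P : unitaryGroup n R := ⟨σ.permMatrix R, permMatrix_mem_unitaryGroup σ⟩
  have conj_eq (Y : Matrix n n R) : conjStarAlgAut R _ P Y = Y.submatrix σ σ := by
    change σ.permMatrix R * Y * star (σ.permMatrix R) = Y.submatrix σ σ
    rw [star_eq_conjTranspose, conjTranspose_permMatrix, PEquiv.toMatrix_toPEquiv_mul,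
      PEquiv.mul_toMatrix_toPEquiv]
    rfl
  rw [← conj_eq X, hΦ, conj_eq (Φ X)]

lemma isDiag_map_diagonal [NoZeroDivisors R] [CharZero R] (hΦ : IsUnitarilyCovariant Φ)
    (v : n → R) : (Φ (diagonal v)).IsDiag := by
  intro k l hkl
  let s : n → R := fun i => if i = k then -1 else 1
  have hs : ∀ i, s i * star (s i) = 1 := fun i => by by_cases hi : i = k <;> simp [s, hi]
  let S : unitaryGroup n R := ⟨diagonal s, diagonal_mem_unitaryGroup hs⟩
  have conj_apply (Y : Matrix n n R) (i j : n) :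
      conjStarAlgAut R _ S Y i j = s i * Y i j * star (s j) := by
    simp [S, star_eq_conjTranspose, diagonal_conjTranspose]
  have flip_fixes : conjStarAlgAut R _ S (diagonal v) = diagonal v := by
    simp [S, star_eq_conjTranspose, diagonal_conjTranspose, mul_right_comm _ (v _), hs]
  have fixed : Φ (diagonal v) k l = s k * Φ (diagonal v) k l * star (s l) := by
    rw [← conj_apply, ← hΦ, flip_fixes]
  simpa [s, hkl.symm, self_eq_neg] using fixed

lemma exists_map_single_eq [NoZeroDivisors R] [CharZero R] (hΦ : IsUnitarilyCovariant Φ) :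
    ∃ p q : R, ∀ i, Φ (single i i 1) = p • single i i 1 + q • 1 := by
  have perm_invariant (σ : Equiv.Perm n) (i j : n) :
      Φ (single (σ i) (σ i) 1) (σ j) (σ j) = Φ (single i i 1) j j := by
    rw [← submatrix_apply (Φ _) σ σ, ← hΦ.map_submatrix_perm]
    simp
  obtain ⟨p, q, hpq⟩ := exists_eq_ite_add_of_perm_invariant
    (f := fun i j => Φ (single i i 1) j j) perm_invariant
  refine ⟨p, q, fun i => ext fun j k => ?_⟩
  by_cases hjk : j = k
  · subst hjk
    simp [hpq, single_apply]
  · have off_diag : Φ (single i i 1) j k = 0 := by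
      rw [← diagonal_single]
      exact hΦ.isDiag_map_diagonal _ hjk
    have : ¬(i = j ∧ i = k) := fun h => hjk (h.1.symm.trans h.2)
    simp [off_diag, hjk, this]

end IsUnitarilyCovariant

end UnitaryGroup

namespace IsUnitarilyCovariant

variable {n : Type*} [Fintype n] [DecidableEq n] {Φ Ψ : Matrix n n ℂ →ₗ[ℂ] Matrix n n ℂ}

lemma ext_single (hΦ : IsUnitarilyCovariant Φ) (hΨ : IsUnitarilyCovariant Ψ)
    (h : ∀ i, Φ (single i i 1) = Ψ (single i i 1)) : Φ = Ψ := by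
  have eq_diagonal (v : n → ℂ) : Φ (diagonal v) = Ψ (diagonal v) := by
    have : diagonal v = ∑ i, v i • single i i 1 := by
      simp [smul_single, sum_single_eq_diagonal]
    simp only [this, map_sum, map_smul, h]
  refine LinearMap.ext_on span_selfAdjoint fun X (hX : X.IsHermitian) => ?_
  rw [hX.spectral_theorem, hΦ, hΨ, eq_diagonal]

theorem exists_eq_depolarizing (hΦ : IsUnitarilyCovariant Φ) :
    ∃ p q : ℂ, Φ = depolarizing n p q := by
  obtain ⟨p, q, hpq⟩ := hΦ.exists_map_single_eq
  refine ⟨p, q, hΦ.ext_single (isUnitarilyCovariant_depolarizing p q) fun i => ?_⟩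
  simp [hpq, depolarizing_apply]

end IsUnitarilyCovariant

section AveragedSandwich

open scoped Matrix.Norms.L2Operator

variable {n : Type*} [Fintype n] [DecidableEq n]

instance compactSpace_unitaryGroup {𝕜 : Type*} [RCLike 𝕜] : CompactSpace (unitaryGroup n 𝕜) := by
  have : ProperSpace (Matrix n n 𝕜) := FiniteDimensional.proper 𝕜 _
  refine isCompact_iff_compactSpace.mp <| Metric.isCompact_of_isClosed_isBounded
    isClosed_unitary <| isBounded_iff_forall_norm_le.mpr ⟨‖(1 : Matrix n n 𝕜)‖, fun U hU => ?_⟩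
  simpa only [mul_one] using (CStarRing.norm_mem_unitary_mul (1 : Matrix n n 𝕜) hU).le

lemma continuous_conjStarAlgAut {R : Type*} [CommRing R] [StarRing R] [TopologicalSpace R]
    [IsTopologicalRing R] [ContinuousStar R] (A : Matrix n n R) :
    Continuous fun U : unitaryGroup n R => conjStarAlgAut R _ U A := by
  simp only [conjStarAlgAut_apply]
  fun_prop

variable [MeasurableSpace (unitaryGroup n ℂ)] [BorelSpace (unitaryGroup n ℂ)]

lemma integrable_sandwich (μ : Measure (unitaryGroup n ℂ)) [IsFiniteMeasure μ]
    (A C X : Matrix n n ℂ) :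
    Integrable (fun U => conjStarAlgAut ℂ _ U A * X * conjStarAlgAut ℂ _ U C) μ :=
  (((continuous_conjStarAlgAut A).mul_const X).mul
    (continuous_conjStarAlgAut C)).integrable_of_hasCompactSupport (.of_compactSpace _)

/-- The average `X ↦ ∫ U, (U A U*) X (U C U*) ∂μ` over the unitary group, a matrix-valued Bochner
integral for the operator norm. It packages the second moments of `U A U*` and `U C U*`. -/
noncomputable def averagedSandwich (μ : Measure (unitaryGroup n ℂ)) [IsFiniteMeasure μ]
    (A C : Matrix n n ℂ) : Matrix n n ℂ →ₗ[ℂ] Matrix n n ℂ where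
  toFun X := ∫ U, conjStarAlgAut ℂ _ U A * X * conjStarAlgAut ℂ _ U C ∂μ
  map_add' X Y := by
    rw [← integral_add (integrable_sandwich μ A C X) (integrable_sandwich μ A C Y)]
    simp only [mul_add, add_mul]
  map_smul' c X := by
    rw [RingHom.id_apply, ← integral_smul]
    simp only [mul_smul_comm, smul_mul_assoc]

variable (μ : Measure (unitaryGroup n ℂ)) [IsFiniteMeasure μ] (A C : Matrix n n ℂ)

lemma linearMap_averagedSandwich {E : Type*} [NormedAddCommGroup E] [NormedSpace ℂ E]
    [CompleteSpace E] (ℓ : Matrix n n ℂ →ₗ[ℂ] E) (X : Matrix n n ℂ) :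
    ℓ (averagedSandwich μ A C X) =
      ∫ U, ℓ (conjStarAlgAut ℂ _ U A * X * conjStarAlgAut ℂ _ U C) ∂μ :=
  (ℓ.toContinuousLinearMap.integral_comp_comm (integrable_sandwich μ A C X)).symm

lemma averagedSandwich_apply (X : Matrix n n ℂ) (i j : n) :
    averagedSandwich μ A C X i j =
      ∫ U, (conjStarAlgAut ℂ _ U A * X * conjStarAlgAut ℂ _ U C) i j ∂μ :=
  linearMap_averagedSandwich μ A C (entryLinearMap ℂ ℂ i j) X

lemma isUnitarilyCovariant_averagedSandwich [μ.IsMulLeftInvariant] :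
    IsUnitarilyCovariant (averagedSandwich μ A C) := fun V X =>
  calc averagedSandwich μ A C (conjStarAlgAut ℂ _ V X)
      = ∫ U, conjStarAlgAut ℂ _ (V * U) A * conjStarAlgAut ℂ _ V X *
          conjStarAlgAut ℂ _ (V * U) C ∂μ := (integral_mul_left_eq_self _ V).symm
    _ = ∫ U, conjStarAlgAut ℂ _ V
          (conjStarAlgAut ℂ _ U A * X * conjStarAlgAut ℂ _ U C) ∂μ := by
        simp only [map_mul, StarAlgEquiv.mul_apply]
    _ = conjStarAlgAut ℂ _ V (averagedSandwich μ A C X) :=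
        (linearMap_averagedSandwich μ A C
          (conjStarAlgAut ℂ (Matrix n n ℂ) V).toAlgEquiv.toLinearMap X).symm

end AveragedSandwich

section ProbabilityMeasure

variable {n : Type*} [Fintype n] [DecidableEq n]
  [MeasurableSpace (unitaryGroup n ℂ)] [BorelSpace (unitaryGroup n ℂ)]
  (μ : Measure (unitaryGroup n ℂ)) [IsProbabilityMeasure μ] (A C : Matrix n n ℂ)

lemma trace_averagedSandwich_one : (averagedSandwich μ A C 1).trace = (A * C).trace := by
  have := linearMap_averagedSandwich μ A C (traceLinearMap n ℂ ℂ) 1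
  simpa [-conjStarAlgAut_apply, ← map_mul, trace_conjStarAlgAut] using this

lemma sum_averagedSandwich_single :
    ∑ i, ∑ j, averagedSandwich μ A C (single i j 1) i j = A.trace * C.trace := by
  have entry (P Q : Matrix n n ℂ) (i j : n) :
      (P * (single i j 1 : Matrix n n ℂ) * Q) i j = P i i * Q j j := by
    simp [Matrix.mul_apply, single_apply, ite_and]
  have integrable_entry (i j : n) :
      Integrable (fun U => conjStarAlgAut ℂ _ U A i i * conjStarAlgAut ℂ _ U C j j) μ :=
    (((continuous_conjStarAlgAut A).matrix_elem i i).mul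
      ((continuous_conjStarAlgAut C).matrix_elem j j)).integrable_of_hasCompactSupport
        (.of_compactSpace _)
  calc ∑ i, ∑ j, averagedSandwich μ A C (single i j 1) i j
      = ∑ i, ∑ j, ∫ U, conjStarAlgAut ℂ _ U A i i * conjStarAlgAut ℂ _ U C j j ∂μ := by
        simp only [averagedSandwich_apply, entry]
    _ = ∫ U, ∑ i, ∑ j, conjStarAlgAut ℂ _ U A i i * conjStarAlgAut ℂ _ U C j j ∂μ := by
        rw [integral_finsetSum _ fun i _ => integrable_finsetSum _ fun j _ => integrable_entry i j]
        exact Finset.sum_congr rfl fun i _ =>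
          (integral_finsetSum _ fun j _ => integrable_entry i j).symm
    _ = ∫ U, (conjStarAlgAut ℂ _ U A).trace * (conjStarAlgAut ℂ _ U C).trace ∂μ := by
        simp only [← Finset.sum_mul_sum]
        rfl
    _ = A.trace * C.trace := by
        simp only [trace_conjStarAlgAut, integral_const, probReal_univ, one_smul]

end ProbabilityMeasure

theorem unitary_haar_second_order_expectation_general {n : Type*} [Fintype n] [DecidableEq n]
    [Nontrivial n] [MeasurableSpace (unitaryGroup n ℂ)] [BorelSpace (unitaryGroup n ℂ)]
    (A B C : Matrix n n ℂ) (μ : Measure (unitaryGroup n ℂ)) [μ.IsMulLeftInvariant]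
    [IsProbabilityMeasure μ] (i i' : n) :
    ∫ U : unitaryGroup n ℂ,
        ((U : Matrix n n ℂ) * A * star (U : Matrix n n ℂ) * B *
          (U : Matrix n n ℂ) * C * star (U : Matrix n n ℂ)) i i' ∂μ
      = (1 / ((Fintype.card n : ℂ) ^ 2 - 1)) *
          (A.trace * C.trace * B i i' +
            (A * C).trace * B.trace * (1 : Matrix n n ℂ) i i')
        - (1 / ((Fintype.card n : ℂ) * ((Fintype.card n : ℂ) ^ 2 - 1))) *
          ((A * C).trace * B i i' +
            A.trace * B.trace * C.trace * (1 : Matrix n n ℂ) i i') := by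
  obtain ⟨p, q, h⟩ := (isUnitarilyCovariant_averagedSandwich μ A C).exists_eq_depolarizing
  have trace_mul_eq := trace_averagedSandwich_one μ A C
  have trace_mul_trace_eq := sum_averagedSandwich_single μ A C
  rw [h, trace_depolarizing_one] at trace_mul_eq
  rw [h, sum_depolarizing_single] at trace_mul_trace_eq
  have integral_eq := averagedSandwich_apply μ A C B i i'
  simp only [conjStarAlgAut_apply, ← Matrix.mul_assoc] at integral_eq
  rw [← integral_eq, h, mul_right_comm A.trace B.trace, ← trace_mul_eq, ← trace_mul_trace_eq]
  have card_ne_zero : (Fintype.card n : ℂ) ≠ 0 := Nat.cast_ne_zero.mpr Fintype.card_ne_zero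
  have card_sq_sub_one_ne_zero : (Fintype.card n : ℂ) ^ 2 - 1 ≠ 0 := by
    rw [sub_ne_zero]
    exact_mod_cast (Nat.one_lt_pow two_ne_zero (Fintype.one_lt_card (α := n))).ne'
  simp only [depolarizing_apply, Matrix.add_apply, Matrix.smul_apply, smul_eq_mul]
  field_simp
  ring

/-- For Haar-distributed `U` on `U(d)` with `d ≥ 2` and fixed matrices `A`, `B`, `C`,
`E[U A U* B U C U*] = (tr A tr C · B + tr(AC) tr B · I)/(d²−1)
− (tr(AC) · B + tr A tr B tr C · I)/(d(d²−1))`, entrywise. -/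
theorem unitary_haar_second_order_expectation {d : ℕ} (hd : 2 ≤ d)
    (A B C : Matrix (Fin d) (Fin d) ℂ)
    (μ : Measure (Matrix.unitaryGroup (Fin d) ℂ)) [μ.IsHaarMeasure] [IsProbabilityMeasure μ]
    (i i' : Fin d) :
    ∫ U : Matrix.unitaryGroup (Fin d) ℂ,
        ((U : Matrix (Fin d) (Fin d) ℂ) * A * star (U : Matrix (Fin d) (Fin d) ℂ) * B *
          (U : Matrix (Fin d) (Fin d) ℂ) * C * star (U : Matrix (Fin d) (Fin d) ℂ)) i i' ∂μ
      = (1 / ((d : ℂ) ^ 2 - 1)) *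
          (A.trace * C.trace * B i i' +
            (A * C).trace * B.trace * (1 : Matrix (Fin d) (Fin d) ℂ) i i')
        - (1 / ((d : ℂ) * ((d : ℂ) ^ 2 - 1))) *
          ((A * C).trace * B i i' +
            A.trace * B.trace * C.trace * (1 : Matrix (Fin d) (Fin d) ℂ) i i') := by
  have : Nontrivial (Fin d) := Fin.nontrivial_iff_two_le.mpr hd
  simpa only [Fintype.card_fin] using
    unitary_haar_second_order_expectation_general A B C μ i i'
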